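/- Let F be a field, n ≥ 1, and equip F[x_0,…,x_{n-1}] with the lexicographic monomial order in which x_{n-1} ≻ ⋯ ≻ x_0. Let I be an ideal with finite lex Gröbner basis B, and fix j with j + 1 ≤ n. Let a = (a_0,…,a_{j-1}) ∈ F^j be a common zero of every element of B ∩ R_j. Let C := (B ∩ R_{j+1}) \ R_j, the elements of B that involve x_j but no variable of index > j; assume C is nonempty, and let b₁ be the element of C whose lex leading monomial is smallest among the leading monomials of elements of C. For b ∈ C, let b̂ ∈ F[X] denote the univariate polynomial obtained from b by substituting x_i := a_i for all i < j and x_j := X, and let d₁ := deg_{x_j}(b₁). Assume the coefficient of X^{d₁} in b̂₁ is nonzero (i.e., the leading coefficient of b₁ viewed as a polynomial in x_j does not vanish at a). Then for every α ∈ F with b̂₁(α) = 0, the point of F^n obtained by extending a with x_j := α is a common zero of every element of B ∩ R_{j+1}. -/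

import Mathlib

/-!
Let `x` extend `a` by a root of `b̂₁`, so that `b₁(x) = 0`. Every `f ∈ I ∩ R_{j+1}` vanishes at `x`,
by well-founded induction on the leading monomial of `f`. A Gröbner basis element `b` whose leading
monomial divides that of `f` lies in `R_{j+1}`, since the order is lex.

* If `b ∈ R_j`, then `b(x) = 0` by the choice of `a`, and one ordinary reduction step by `b` lowers
  the leading monomial without changing the value at `x`.
* Otherwise `b ∈ C`, and the minimality of `b₁` gives `deg_{x_j} b₁ ≤ deg_{x_j} f`. One step of
  pseudo-division by `b₁` replaces `f` by `L f - M x_j^k b₁`, where `L` and `M` are the leading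
  coefficients of `b₁` and `f` in `x_j`. The `x_j`-degree drops, the new polynomial vanishes at `x` by
  induction, hence `L(x) f(x) = 0`, and `L(x) ≠ 0` by hypothesis.
-/


/-- `InRj j p` : the polynomial `p` lies in `R_j`, i.e. involves only the
variables `x_0, …, x_{j-1}`. -/
def InRj {n : ℕ} {F : Type*} [CommSemiring F] (j : ℕ) (p : MvPolynomial (Fin n) F) : Prop :=
  ∀ m ∈ p.support, ∀ i : Fin n, j ≤ (i : ℕ) → m i = 0

/-- The lexicographic order on exponent vectors in which `x_{n-1} ≻ ⋯ ≻ x_0`. -/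
def LexLT {n : ℕ} (a b : Fin n →₀ ℕ) : Prop :=
  ∃ i : Fin n, a i < b i ∧ ∀ k : Fin n, i < k → a k = b k

/-- `m` is the lex leading monomial (leading exponent vector) of `p`. -/
def IsLeadMonomial {n : ℕ} {F : Type*} [CommSemiring F] (p : MvPolynomial (Fin n) F)
    (m : Fin n →₀ ℕ) : Prop :=
  m ∈ p.support ∧ ∀ m' ∈ p.support, m' = m ∨ LexLT m' m

/-- `B` is a (finite) lex Gröbner basis of the ideal `I`. -/
def IsLexGroebnerBasis {n : ℕ} {F : Type*} [Field F]
    (B : Finset (MvPolynomial (Fin n) F)) (I : Ideal (MvPolynomial (Fin n) F)) : Prop :=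
  (↑B : Set (MvPolynomial (Fin n) F)) ⊆ I ∧
  Ideal.span (↑B : Set (MvPolynomial (Fin n) F)) = I ∧
  ∀ f ∈ I, f ≠ 0 → ∃ b ∈ B, b ≠ 0 ∧ ∃ mb mf : Fin n →₀ ℕ,
    IsLeadMonomial b mb ∧ IsLeadMonomial f mf ∧ ∀ i : Fin n, mb i ≤ mf i

/-- `bHat a b` is the univariate polynomial `b̂ ∈ F[X]` obtained from `b` by
substituting `x_i := a_i` for `i < j` and `X` for the remaining variables
(in particular `X` for `x_j`). -/
noncomputable def bHat {F : Type*} [Field F] {n : ℕ} (j : ℕ) (a : Fin j → F)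
    (b : MvPolynomial (Fin n) F) : Polynomial F :=
  MvPolynomial.eval₂ Polynomial.C
    (fun i : Fin n => if h : (i : ℕ) < j then Polynomial.C (a ⟨i, h⟩) else Polynomial.X) b

open MvPolynomial

section Helpers

variable {n : ℕ} {F : Type*} [Field F]

/-! ### The lex order and the rings `R_j` -/

/-- `LexLT` is Mathlib's lexicographic order on `Fin n →₀ ℕ` for the reversed order on indices. -/
theorem lexLT_wf : WellFounded (LexLT (n := n)) := by
  have h : WellFounded (Finsupp.Lex (α := Fin n) (N := ℕ) (· > ·) (· < ·)) :=
    Finsupp.Lex.wellFounded_of_finite _ wellFounded_lt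
  refine Subrelation.wf ?_ h
  rintro a b ⟨i, h1, h2⟩
  exact ⟨i, fun k hk => h2 k hk, h1⟩

theorem LexLT.add_left {a b : Fin n →₀ ℕ} (c : Fin n →₀ ℕ) (h : LexLT a b) :
    LexLT (c + a) (c + b) := by
  obtain ⟨i, h1, h2⟩ := h
  exact ⟨i, by simpa using h1, fun k hk => by simp [h2 k hk]⟩

/-- Identifies `R_j` with a Mathlib subalgebra, which supplies its closure properties. -/
theorem InRj.mem_supported {j : ℕ} {p : MvPolynomial (Fin n) F} :
    InRj j p ↔ p ∈ supported F {i : Fin n | (i : ℕ) < j} := by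
  rw [MvPolynomial.mem_supported]
  constructor
  · intro h i hi
    obtain ⟨m, hm, him⟩ := (mem_vars_iff_mem_support i).1 hi
    by_contra hij
    exact Finsupp.mem_support_iff.1 him (h m hm i (not_lt.1 hij))
  · intro h m hm i hi
    by_contra him
    have : i ∈ p.vars := (mem_vars_iff_mem_support i).2 ⟨m, hm, Finsupp.mem_support_iff.2 him⟩
    exact absurd (h this) (not_lt.2 hi)

/-- In lex order, a leading monomial free of the variables of index greater than `j` forces the
whole polynomial to be free of them, and it has the largest exponent of `x_j`. -/
theorem IsLeadMonomial.bound {j : Fin n} {p : MvPolynomial (Fin n) F} {m : Fin n →₀ ℕ}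
    (h : IsLeadMonomial p m) (hm : ∀ i, j < i → m i = 0) :
    ∀ m' ∈ p.support, (∀ i, j < i → m' i = 0) ∧ m' j ≤ m j := by
  intro m' hm'
  rcases h.2 m' hm' with rfl | ⟨i, h1, h2⟩
  · exact ⟨hm, le_rfl⟩
  · have hij : i ≤ j := by
      by_contra hc
      have := hm i (not_le.1 hc)
      omega
    refine ⟨fun k hk => (h2 k (hij.trans_lt hk)).trans (hm k hk), ?_⟩
    rcases hij.eq_or_lt with rfl | hlt
    · exact h1.le
    · exact (h2 j hlt).le

/-! ### Coefficients and pseudo-division in one variable -/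

/-- The coefficient of `x_j ^ d` in `p`, as a polynomial in the other variables. -/
noncomputable def coeffIn (j : Fin n) (d : ℕ) (p : MvPolynomial (Fin n) F) :
    MvPolynomial (Fin n) F :=
  ∑ m ∈ p.support with m j = d, monomial (m.erase j) (coeff m p)

theorem monomial_erase_mul (j : Fin n) (m : Fin n →₀ ℕ) (c : F) :
    monomial (m.erase j) c * X j ^ (m j) = monomial m c := by
  rw [X_pow_eq_monomial, monomial_mul, mul_one, Finsupp.erase_add_single]

/-- Removing the `x_j ^ d` part of `p` leaves its terms of any other degree in `x_j`. -/
theorem sub_coeffIn (j : Fin n) (d : ℕ) (p : MvPolynomial (Fin n) F) :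
    p - coeffIn j d p * X j ^ d = ∑ m ∈ p.support with m j ≠ d, monomial m (coeff m p) := by
  have h1 : coeffIn j d p * X j ^ d = ∑ m ∈ p.support with m j = d, monomial m (coeff m p) := by
    rw [coeffIn, Finset.sum_mul]
    refine Finset.sum_congr rfl fun m hm => ?_
    rw [← (Finset.mem_filter.1 hm).2, monomial_erase_mul]
  rw [h1, sub_eq_iff_eq_add', Finset.sum_filter_add_sum_filter_not]
  exact p.as_sum

theorem degreeOf_sub_coeffIn {j : Fin n} {d : ℕ} {p : MvPolynomial (Fin n) F} (hd : 0 < d)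
    (hp : ∀ m ∈ p.support, m j ≤ d) : degreeOf j (p - coeffIn j d p * X j ^ d) < d := by
  rw [sub_coeffIn]
  refine (degreeOf_sum_le _ _ _).trans_lt ?_
  rw [Finset.sup_lt_iff (by simpa using hd)]
  intro m hm
  obtain ⟨h1, h2⟩ := Finset.mem_filter.1 hm
  rw [degreeOf_monomial_eq _ _ (mem_support_iff.1 h1)]
  exact lt_of_le_of_ne (hp m h1) h2

theorem degreeOf_coeffIn (j : Fin n) (d : ℕ) (p : MvPolynomial (Fin n) F) :
    degreeOf j (coeffIn j d p) = 0 := by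
  rw [← Nat.le_zero]
  refine (degreeOf_sum_le _ _ _).trans (Finset.sup_le fun m hm => ?_)
  rw [degreeOf_monomial_eq _ _ (mem_support_iff.1 (Finset.mem_filter.1 hm).1)]
  simp

theorem InRj.coeffIn {k : ℕ} {p : MvPolynomial (Fin n) F} (hp : InRj k p) (j : Fin n) (d : ℕ) :
    InRj k (coeffIn j d p) := by
  rw [InRj.mem_supported]
  refine Subalgebra.sum_mem _ fun m hm => ?_
  rw [← InRj.mem_supported]
  intro m' hm' i hi
  obtain rfl := Finset.mem_singleton.1 (support_monomial_subset hm')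
  have := hp m (Finset.mem_filter.1 hm).1 i hi
  rw [Finsupp.erase_apply]
  split_ifs <;> simp [this]

/-- One step of pseudo-division in `x_j`. -/
theorem degreeOf_pseudo_step {j : Fin n} {d e : ℕ} {p f : MvPolynomial (Fin n) F} (hd : 0 < d)
    (hde : d ≤ e) (hp : ∀ m ∈ p.support, m j ≤ d) (hf : ∀ m ∈ f.support, m j ≤ e) :
    degreeOf j (coeffIn j d p * f - coeffIn j e f * X j ^ (e - d) * p) < e := by
  have h1 := degreeOf_sub_coeffIn hd hp
  have h2 := degreeOf_sub_coeffIn (hd.trans_le hde) hf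
  have key : coeffIn j d p * f - coeffIn j e f * X j ^ (e - d) * p =
      coeffIn j d p * (f - coeffIn j e f * X j ^ e) -
        coeffIn j e f * X j ^ (e - d) * (p - coeffIn j d p * X j ^ d) := by
    have : (X j : MvPolynomial (Fin n) F) ^ e = X j ^ (e - d) * X j ^ d := by
      rw [← pow_add, Nat.sub_add_cancel hde]
    rw [this]
    ring
  rw [key]
  refine (degreeOf_sub_le _ _ _).trans_lt (max_lt ?_ ?_)
  · refine (degreeOf_mul_le _ _ _).trans_lt ?_
    rwa [degreeOf_coeffIn, zero_add]
  · have h3 := degreeOf_mul_le j (coeffIn j e f * X j ^ (e - d)) (p - coeffIn j d p * X j ^ d)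
    have h4 := degreeOf_mul_le j (coeffIn j e f) (X j ^ (e - d))
    have h5 : degreeOf j ((X j : MvPolynomial (Fin n) F) ^ (e - d)) ≤ e - d := by
      rw [X_pow_eq_monomial, degreeOf_monomial_eq _ _ one_ne_zero]
      simp
    rw [degreeOf_coeffIn] at h4
    omega

/-! ### Substitution into `R_{j+1}` -/

/-- The term of `b̂` coming from a monomial of `p`, with its coefficient computed at any point `x`
extending `a` because `x_j` has been erased. This expansion is the source of `bHat_coeff` and `bHat_eval`. -/
theorem bHat_eq_sum {j : Fin n} {a : Fin j → F} {x : Fin n → F}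
    (hx : ∀ i : Fin n, ∀ h : (i : ℕ) < j, x i = a ⟨i, h⟩) {p : MvPolynomial (Fin n) F}
    (hp : InRj (j + 1) p) :
    bHat j a p = ∑ m ∈ p.support,
      Polynomial.C (eval x (monomial (m.erase j) (coeff m p))) * Polynomial.X ^ (m j) := by
  rw [bHat, eval₂_eq']
  refine Finset.sum_congr rfl fun m hm => ?_
  rw [eval_monomial, Polynomial.C_mul, mul_assoc]
  congr 1
  rw [Finsupp.prod_fintype _ _ (by simp), ← Finset.mul_prod_erase _ _ (Finset.mem_univ j),
    ← Finset.mul_prod_erase (a := j) _ (fun i => x i ^ (m.erase j) i) (Finset.mem_univ j)]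
  simp only [lt_self_iff_false, dite_false, Finsupp.erase_same, pow_zero, one_mul]
  rw [mul_comm, map_prod]
  congr 1
  refine Finset.prod_congr rfl fun i hi => ?_
  have hij := Finset.ne_of_mem_erase hi
  rw [Finsupp.erase_ne hij]
  split_ifs with h
  · rw [hx i h, map_pow]
  · have : (i : ℕ) ≠ j := fun h => hij (Fin.ext h)
    rw [hp m hm i (by omega)]
    simp

theorem bHat_coeff {j : Fin n} {a : Fin j → F} {x : Fin n → F}
    (hx : ∀ i : Fin n, ∀ h : (i : ℕ) < j, x i = a ⟨i, h⟩) {p : MvPolynomial (Fin n) F}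
    (hp : InRj (j + 1) p) (d : ℕ) :
    (bHat j a p).coeff d = eval x (coeffIn j d p) := by
  rw [bHat_eq_sum hx hp, Polynomial.finsetSum_coeff, coeffIn, map_sum, Finset.sum_filter]
  refine Finset.sum_congr rfl fun m _ => ?_
  rw [Polynomial.coeff_C_mul_X_pow]
  simp only [eq_comm]

theorem bHat_eval {j : Fin n} {a : Fin j → F} {x : Fin n → F}
    (hx : ∀ i : Fin n, ∀ h : (i : ℕ) < j, x i = a ⟨i, h⟩) {p : MvPolynomial (Fin n) F}
    (hp : InRj (j + 1) p) :
    (bHat j a p).eval (x j) = eval x p := by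
  rw [bHat_eq_sum hx hp, Polynomial.eval_finsetSum]
  conv_rhs => rw [p.as_sum, map_sum]
  refine Finset.sum_congr rfl fun m _ => ?_
  conv_rhs => rw [← monomial_erase_mul j]
  simp

/-! ### Reduction by a Gröbner basis element -/

/-- A reduction step by `b` lowers the leading monomial. -/
theorem lexLT_of_reduction {f b : MvPolynomial (Fin n) F} {mf mb m : Fin n →₀ ℕ}
    (hf : IsLeadMonomial f mf) (hb : IsLeadMonomial b mb) (hle : mb ≤ mf)
    (hm : m ∈ (f - monomial (mf - mb) (coeff mf f / coeff mb b) * b).support) :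
    LexLT m mf := by
  have hne : m ≠ mf := by
    rintro rfl
    apply mem_support_iff.1 hm
    rw [coeff_sub]
    have h := coeff_monomial_mul mb (m - mb) (coeff m f / coeff mb b) b
    rw [tsub_add_cancel_of_le hle] at h
    rw [h, div_mul_cancel₀ _ (mem_support_iff.1 hb.1), sub_self]
  rcases Finset.mem_union.1 (support_sub _ _ _ hm) with h | h
  · exact (hf.2 m h).resolve_left hne
  · obtain ⟨u, hu, v, hv, rfl⟩ := Finset.mem_add.1 (support_mul _ _ h)
    obtain rfl := Finset.mem_singleton.1 (support_monomial_subset hu)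
    rcases hb.2 v hv with rfl | hlt
    · exact absurd (tsub_add_cancel_of_le hle) hne
    · have := hlt.add_left (mf - mb)
      rwa [tsub_add_cancel_of_le hle] at this

end Helpers

/-- Extension, symbolic form: if `a ∈ F^j` is a common zero of `B ∩ R_j`,
`C := (B ∩ R_{j+1}) \ R_j` is nonempty, `b₁ ∈ C` has lex-smallest leading
monomial among `C`, and the leading coefficient of `b₁` in `x_j` does not
vanish at `a`, then any root `α` of `b̂₁` extends `a` to a common zero of
`B ∩ R_{j+1}`. -/
theorem extension_roots_of_minimal {F : Type*} [Field F] {n : ℕ} (hn : 1 ≤ n)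
    (I : Ideal (MvPolynomial (Fin n) F)) (B : Finset (MvPolynomial (Fin n) F))
    (hB : IsLexGroebnerBasis B I) (j : ℕ) (hj : j + 1 ≤ n) (a : Fin j → F)
    -- `a` is a common zero of every element of `B ∩ R_j`
    (ha : ∀ x : Fin n → F, (∀ i : Fin n, ∀ h : (i : ℕ) < j, x i = a ⟨i, h⟩) →
      ∀ b ∈ B, InRj j b → MvPolynomial.eval x b = 0)
    (b₁ : MvPolynomial (Fin n) F)
    -- `b₁ ∈ C = (B ∩ R_{j+1}) \ R_j`
    (hb₁ : b₁ ∈ B ∧ InRj (j + 1) b₁ ∧ ¬ InRj j b₁)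
    (m₁ : Fin n →₀ ℕ) (hm₁ : IsLeadMonomial b₁ m₁)
    -- `b₁` has lex-smallest leading monomial among the elements of `C`
    (hmin : ∀ b : MvPolynomial (Fin n) F, (b ∈ B ∧ InRj (j + 1) b ∧ ¬ InRj j b) →
      ∀ m : Fin n →₀ ℕ, IsLeadMonomial b m → ¬ LexLT m m₁)
    -- the leading coefficient of `b₁` in `x_j` does not vanish at `a`
    (hlc : (bHat j a b₁).coeff (MvPolynomial.degreeOf (⟨j, hj⟩ : Fin n) b₁) ≠ 0) :
    ∀ α : F, (bHat j a b₁).eval α = 0 →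
      ∀ x : Fin n → F, (∀ i : Fin n, ∀ h : (i : ℕ) < j, x i = a ⟨i, h⟩) →
        x ⟨j, hj⟩ = α →
        ∀ b ∈ B, InRj (j + 1) b → MvPolynomial.eval x b = 0 := by
  intro α hα x hx hxα
  obtain ⟨hBI, -, hG⟩ := hB
  obtain ⟨hb₁B, hb₁R, hb₁N⟩ := hb₁
  let J : Fin n := ⟨j, hj⟩
  have hhigh : ∀ {p : MvPolynomial (Fin n) F}, InRj (j + 1) p → ∀ m ∈ p.support,
      ∀ i, J < i → m i = 0 := fun hp m hm i hi => hp m hm i hi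
  have hx₁ : MvPolynomial.eval x b₁ = 0 := by
    rw [← hxα] at hα
    rw [← bHat_eval (j := J) hx hb₁R]
    exact hα
  have hL : MvPolynomial.eval x (coeffIn J (degreeOf J b₁) b₁) ≠ 0 := by
    rw [← bHat_coeff (j := J) hx hb₁R]
    exact hlc
  have hdeg : ∀ m ∈ b₁.support, m J ≤ degreeOf J b₁ := fun m hm => monomial_le_degreeOf J hm
  have hpos : 0 < degreeOf J b₁ := by
    by_contra h0
    refine hb₁N fun m hm i hi => ?_
    rcases hi.eq_or_lt with h | h
    · have := hdeg m hm
      rw [show i = J from Fin.ext h.symm]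
      omega
    · exact hb₁R m hm i h
  have hdm₁ : degreeOf J b₁ ≤ m₁ J := by
    rw [degreeOf_le_iff]
    exact fun m hm => (hm₁.bound (hhigh hb₁R m₁ hm₁.1) m hm).2
  have key : ∀ mf : Fin n →₀ ℕ, ∀ f ∈ I, InRj (j + 1) f → IsLeadMonomial f mf →
      MvPolynomial.eval x f = 0 := by
    intro mf
    induction mf using lexLT_wf.induction with
    | _ mf ih =>
    intro f hfI hfR hf
    have step : ∀ g ∈ I, InRj (j + 1) g → (∀ m ∈ g.support, LexLT m mf) →
        MvPolynomial.eval x g = 0 := by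
      intro g hgI hgR hg
      by_cases hg0 : g = 0
      · simp [hg0]
      · obtain ⟨-, -, -, -, m, -, hm, -⟩ := hG g hgI hg0
        exact ih m (hg m hm.1) g hgI hgR hm
    have hf0 : f ≠ 0 := by
      rintro rfl
      simpa using hf.1
    obtain ⟨b, hbB, -, mb, mf', hb, hf', hle⟩ := hG f hfI hf0
    -- leading monomials are unique, so the monomial supplied by the Gröbner property is `mf`
    obtain rfl : mf' = mf := by
      rcases hf.2 mf' hf'.1 with h | ⟨i, h1, h2⟩
      · exact h
      · rcases hf'.2 mf hf.1 with h | ⟨k, h3, h4⟩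
        · exact h.symm
        · rcases lt_trichotomy i k with h | rfl | h
          · have := h2 k h
            omega
          · omega
          · have := h4 i h
            omega
    have hmb : ∀ i, J < i → mb i = 0 := fun i hi =>
      Nat.le_zero.1 ((hle i).trans (hhigh hfR mf' hf.1 i hi).le)
    have hbR : InRj (j + 1) b := fun m hm i hi => (hb.bound hmb m hm).1 i hi
    by_cases hbj : InRj j b
    · have h := step (f - monomial (mf' - mb) (coeff mf' f / coeff mb b) * b)
        (I.sub_mem hfI (I.mul_mem_left _ (hBI hbB))) ?_
        fun m hm => lexLT_of_reduction hf hb (fun i => hle i) hm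
      · rwa [map_sub, map_mul, ha x hx b hbB hbj, mul_zero, sub_zero] at h
      · rw [InRj.mem_supported] at hbR ⊢
        refine Subalgebra.sub_mem _ (InRj.mem_supported.1 hfR) (Subalgebra.mul_mem _ ?_ hbR)
        rw [← InRj.mem_supported]
        intro m hm i hi
        obtain rfl := Finset.mem_singleton.1 (support_monomial_subset hm)
        simp [hfR mf' hf.1 i hi]
    · -- the leading monomial of `b₁` is smallest in `C`, so its exponent of `x_j` is too
      have hmm : m₁ J ≤ mb J := by
        by_contra hc
        exact hmin b ⟨hbB, hbR, hbj⟩ mb hb ⟨J, not_le.1 hc, fun k hk => by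
          rw [hmb k hk, hhigh hb₁R m₁ hm₁.1 k hk]⟩
      have hde : degreeOf J b₁ ≤ mf' J := (hdm₁.trans hmm).trans (hle J)
      have hfdeg : ∀ m ∈ f.support, m J ≤ mf' J := fun m hm =>
        (hf.bound (hhigh hfR mf' hf.1) m hm).2
      have hlt := degreeOf_pseudo_step hpos hde hdeg hfdeg
      have hgR : InRj (j + 1) (coeffIn J (degreeOf J b₁) b₁ * f -
          coeffIn J (mf' J) f * X J ^ (mf' J - degreeOf J b₁) * b₁) := by
        have h1 := InRj.mem_supported.1 (hb₁R.coeffIn J (degreeOf J b₁))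
        have h2 := InRj.mem_supported.1 (hfR.coeffIn J (mf' J))
        have h3 := InRj.mem_supported.1 hfR
        have h4 := InRj.mem_supported.1 hb₁R
        have h5 : (X J : MvPolynomial (Fin n) F) ∈ supported F {i : Fin n | (i : ℕ) < j + 1} :=
          X_mem_supported.2 (Nat.lt_succ_self j)
        rw [InRj.mem_supported]
        exact Subalgebra.sub_mem _ (Subalgebra.mul_mem _ h1 h3) (Subalgebra.mul_mem _
          (Subalgebra.mul_mem _ h2 (Subalgebra.pow_mem _ h5 _)) h4)
      have h := step _ (I.sub_mem (I.mul_mem_left _ hfI) (I.mul_mem_left _ (hBI hb₁B))) hgR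
        fun m hm => ⟨J, (monomial_le_degreeOf J hm).trans_lt hlt, fun k hk => by
          rw [hhigh hgR m hm k hk, hhigh hfR mf' hf.1 k hk]⟩
      rw [map_sub, map_mul, map_mul, hx₁, mul_zero, sub_zero] at h
      exact (mul_eq_zero.1 h).resolve_left hL
  intro b hbB hbR
  by_cases hb0 : b = 0
  · simp [hb0]
  · obtain ⟨-, -, -, -, m, -, hm, -⟩ := hG b (hBI hbB) hb0
    exact key m b (hBI hbB) hbR hm
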